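/- If T is an unbiased shift of B embedding a probability measure ν with ν ≠ δ₀, then E₀[√|T|] = ∞. -/

import Mathlib

open MeasureTheory ProbabilityTheory

/-- A two-sided standard Brownian motion: a.s. continuous paths, `B₀ = 0`, independent
increments, and `B_t − B_s` centered Gaussian with variance `t − s` for `s < t`. -/
structure IsTwoSidedBM {Ω : Type*} [MeasurableSpace Ω] (P : Measure Ω) (B : ℝ → Ω → ℝ) :
    Prop where
  aemeas : ∀ t : ℝ, AEMeasurable (B t) P
  cont : ∀ᵐ ω ∂P, Continuous fun t => B t ω
  zero : ∀ᵐ ω ∂P, B 0 ω = 0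
  indepIncr : ∀ (n : ℕ) (t : Fin (n + 1) → ℝ), Monotone t →
    iIndepFun
      (fun (i : Fin n) ω => B (t i.succ) ω - B (t i.castSucc) ω) P
  gaussIncr : ∀ s t : ℝ, s < t →
    Measure.map (fun ω => B t ω - B s ω) P = gaussianReal 0 (Real.toNNReal (t - s))

/-- A random time: a measurable function of the path of `B`. -/
def IsRandomTime {Ω : Type*} [MeasurableSpace Ω] (B : ℝ → Ω → ℝ) (T : Ω → ℝ) : Prop :=
  @Measurable Ω ℝ (MeasurableSpace.comap (fun ω (t : ℝ) => B t ω) inferInstance) _ T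

/-- An unbiased shift: a random time `T` such that `(B_{T+t} − B_T)_{t∈ℝ}` is a two-sided
Brownian motion independent of `B_T`. -/
def IsUnbiasedShift {Ω : Type*} [MeasurableSpace Ω] (P : Measure Ω) (B : ℝ → Ω → ℝ)
    (T : Ω → ℝ) : Prop :=
  IsRandomTime B T ∧
  IsTwoSidedBM P (fun t ω => B (T ω + t) ω - B (T ω) ω) ∧
  IndepFun (fun ω (t : ℝ) => B (T ω + t) ω - B (T ω) ω) (fun ω => B (T ω) ω) P

/-- `T` embeds the distribution `ν`: `B_T` has law `ν`. -/
def Embeds {Ω : Type*} [MeasurableSpace Ω] (P : Measure Ω) (B : ℝ → Ω → ℝ) (T : Ω → ℝ)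
    (ν : Measure ℝ) : Prop :=
  Measure.map (fun ω => B (T ω) ω) P = ν

/-- A stopping time with respect to the filtration `(σ(B_s : s ≤ t))_{t ≥ 0}`. -/
def IsBMStoppingTime {Ω : Type*} [MeasurableSpace Ω] (B : ℝ → Ω → ℝ) (T : Ω → ℝ) : Prop :=
  ∀ t : ℝ, 0 ≤ t →
    MeasurableSet[⨆ s ∈ Set.Iic t, MeasurableSpace.comap (B s) inferInstance] {ω | T ω ≤ t}

/-!
For a path `w` let `F_t(w) = ∫ max(0, 1 - |s|/t) φ(w s) ds`, with `φ` the standard Gaussian density.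
The weight is `t⁻¹`-Lipschitz with support `[-t, t]`, so `F_t(B) - F_t(B_{T + ·})` is at most
`min(|T|/t, 1) A_t` with `A_t = ∫_{-t}^t φ(B_s) ds`. On the other hand `B_{T + ·} = X + W`, where
`W` is a Brownian motion independent of `X ∼ ν`. A centred Gaussian density is largest at `0` and
`ν ≠ δ₀`, so `E[F_t(B)] - E[F_t(X + W)]` is bounded below by some `c > 0` for all `t ≥ 1`.

Like a local time, `A_t` has exponential moments at scale `√t`. At `t = 4 ^ k` it may therefore be
replaced by a multiple of `2 ^ k (k + 1)`, at the price of an error that is exponentially small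
in `k`, whence `E[2 ^ k min(|T|/4 ^ k, 1)] ≥ c'/(k + 1)` for large `k`. Summing over `k`, the left
side gives at most `6 E[√|T|]`, while the harmonic series diverges.
-/

open Filter
open scoped ENNReal NNReal Topology

section DyadicSum

lemma two_pow_mul_min_le {x : ℝ} (hx : 0 ≤ x) (k : ℕ) :
    2 ^ k * min (x ^ 2 / 4 ^ k) 1 ≤
      6 * x * 2 ^ (k + 1) / (2 ^ (k + 1) + x) - 6 * x * 2 ^ k / (2 ^ k + x) := by
  have hq : (0 : ℝ) < 2 ^ k := by positivity
  have hquot : x ^ 2 / 4 ^ k = x ^ 2 / (2 ^ k) ^ 2 := by rw [← pow_mul, mul_comm, pow_mul]; norm_num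
  rw [hquot, pow_succ 2 k]
  generalize (2 : ℝ) ^ k = q at hq
  have hdiff : 6 * x * (q * 2) / (q * 2 + x) - 6 * x * q / (q + x) =
      6 * x ^ 2 * q / ((q * 2 + x) * (q + x)) := by field_simp; ring
  rw [hdiff, le_div_iff₀ (by positivity)]
  rcases le_total x q with hxq | hqx
  · calc q * min (x ^ 2 / q ^ 2) 1 * ((q * 2 + x) * (q + x))
        ≤ q * (x ^ 2 / q ^ 2) * ((q * 2 + q) * (q + q)) := by gcongr; exact min_le_left _ _
      _ = 6 * x ^ 2 * q := by field_simp; ring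
  · calc q * min (x ^ 2 / q ^ 2) 1 * ((q * 2 + x) * (q + x))
        ≤ q * 1 * ((x * 2 + x) * (x + x)) := by gcongr; exact min_le_right _ _
      _ = 6 * x ^ 2 * q := by ring

lemma sum_two_pow_mul_min_le {x : ℝ} (hx : 0 ≤ x) (n : ℕ) :
    ∑ k ∈ Finset.range n, 2 ^ k * min (x ^ 2 / 4 ^ k) 1 ≤ 6 * x := by
  calc ∑ k ∈ Finset.range n, 2 ^ k * min (x ^ 2 / 4 ^ k) 1
      ≤ 6 * x * 2 ^ n / (2 ^ n + x) - 6 * x * 2 ^ 0 / (2 ^ 0 + x) :=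
        (Finset.sum_le_sum fun k _ ↦ two_pow_mul_min_le hx k).trans_eq
          (Finset.sum_range_sub (fun k ↦ 6 * x * 2 ^ k / (2 ^ k + x)) n)
    _ ≤ 6 * x * 2 ^ n / (2 ^ n + x) := sub_le_self _ (by positivity)
    _ ≤ 6 * x := by
        rw [div_le_iff₀ (by positivity)]
        gcongr
        linarith

lemma tsum_ofReal_two_pow_mul_min_le (r : ℝ) :
    ∑' k : ℕ, ENNReal.ofReal (2 ^ k * min (|r| / 4 ^ k) 1) ≤ 6 * ENNReal.ofReal √|r| := by
  refine ENNReal.tsum_le_of_sum_range_le fun n ↦ ?_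
  rw [← ENNReal.ofReal_sum_of_nonneg fun k _ ↦ by positivity, ← ENNReal.ofReal_ofNat 6,
    ← ENNReal.ofReal_mul (by norm_num)]
  refine ENNReal.ofReal_le_ofReal ?_
  simpa only [Real.sq_sqrt (abs_nonneg r)] using
    sum_two_pow_mul_min_le (Real.sqrt_nonneg |r|) n

lemma tsum_ofReal_eq_top_of_eventually_div_le {a : ℕ → ℝ} {c : ℝ} (hc : 0 < c)
    (ha : ∀ᶠ k : ℕ in atTop, c / (k + 1) ≤ a k) : ∑' k, ENNReal.ofReal (a k) = ⊤ := by
  by_contra hfin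
  have hsum : Summable fun k ↦ (a k).toNNReal := ENNReal.tsum_coe_ne_top_iff_summable.1 hfin
  have hharm : Summable fun k : ℕ ↦ c / (k + 1) := by
    refine (NNReal.summable_coe.2 hsum).of_norm_bounded_eventually_nat ?_
    filter_upwards [ha] with k hk
    rw [Real.norm_of_nonneg (by positivity)]
    exact hk.trans (Real.le_coe_toNNReal _)
  have hharm' : Summable fun k : ℕ ↦ 1 / ((k + 1 : ℕ) : ℝ) := by
    simpa [div_eq_mul_inv, summable_mul_left_iff hc.ne'] using hharm
  exact Real.not_summable_one_div_natCast ((summable_nat_add_iff 1).1 hharm')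

lemma ofReal_integral_le_lintegral_ofReal {Ω : Type*} [MeasurableSpace Ω] {P : Measure Ω}
    {G : Ω → ℝ} (hG : Integrable G P) :
    ENNReal.ofReal (∫ ω, G ω ∂P) ≤ ∫⁻ ω, ENNReal.ofReal (G ω) ∂P := by
  rw [integral_eq_lintegral_pos_part_sub_lintegral_neg_part hG]
  exact (ENNReal.ofReal_le_ofReal (sub_le_self _ ENNReal.toReal_nonneg)).trans
    ENNReal.ofReal_toReal_le

lemma lintegral_sqrt_abs_eq_top {Ω : Type*} [MeasurableSpace Ω] {P : Measure Ω} {T : Ω → ℝ}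
    {G : ℕ → Ω → ℝ} (hG : ∀ k, Integrable (G k) P)
    (hGT : ∀ k, ∀ᵐ ω ∂P, G k ω ≤ 2 ^ k * min (|T ω| / 4 ^ k) 1)
    (hsum : ∑' k, ENNReal.ofReal (∫ ω, G k ω ∂P) = ⊤) :
    ∫⁻ ω, ENNReal.ofReal √|T ω| ∂P = ⊤ := by
  have hle : (⊤ : ℝ≥0∞) ≤ 6 * ∫⁻ ω, ENNReal.ofReal √|T ω| ∂P :=
    calc (⊤ : ℝ≥0∞) = ∑' k, ENNReal.ofReal (∫ ω, G k ω ∂P) := hsum.symm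
      _ ≤ ∑' k, ∫⁻ ω, ENNReal.ofReal (G k ω) ∂P :=
          ENNReal.tsum_le_tsum fun k ↦ ofReal_integral_le_lintegral_ofReal (hG k)
      _ = ∫⁻ ω, ∑' k, ENNReal.ofReal (G k ω) ∂P :=
          (lintegral_tsum fun k ↦ (hG k).aemeasurable.ennreal_ofReal).symm
      _ ≤ ∫⁻ ω, 6 * ENNReal.ofReal √|T ω| ∂P := by
          refine lintegral_mono_ae ?_
          filter_upwards [ae_all_iff.2 hGT] with ω hω
          exact (ENNReal.tsum_le_tsum fun k ↦ ENNReal.ofReal_le_ofReal (hω k)).trans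
            (tsum_ofReal_two_pow_mul_min_le _)
      _ = 6 * ∫⁻ ω, ENNReal.ofReal √|T ω| ∂P := lintegral_const_mul' _ _ (by norm_num)
  exact (ENNReal.mul_eq_top.1 (top_le_iff.1 hle)).elim And.right fun h ↦ absurd h.1 (by norm_num)

end DyadicSum

section Gaussian

lemma gaussianPDFReal_le_inv_sqrt (m : ℝ) (v : ℝ≥0) (x : ℝ) :
    gaussianPDFReal m v x ≤ (√v)⁻¹ := by
  have hpi : (√(2 * Real.pi))⁻¹ ≤ 1 :=
    inv_le_one_of_one_le₀ (Real.one_le_sqrt.2 (by linarith [Real.pi_gt_three]))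
  calc gaussianPDFReal m v x
      = (√(2 * Real.pi))⁻¹ * (√v)⁻¹ * Real.exp (-(x - m) ^ 2 / (2 * v)) := by
        rw [gaussianPDFReal, Real.sqrt_mul (by positivity), mul_inv]
    _ ≤ 1 * (√v)⁻¹ * 1 := by
        gcongr
        exact Real.exp_le_one_iff.2
          (div_nonpos_of_nonpos_of_nonneg (neg_nonpos.2 (sq_nonneg _)) (by positivity))
    _ = (√v)⁻¹ := by ring

lemma gaussianPDFReal_one_le_one (m x : ℝ) : gaussianPDFReal m 1 x ≤ 1 := by
  simpa using gaussianPDFReal_le_inv_sqrt m 1 x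

lemma continuous_gaussianPDFReal (m : ℝ) (v : ℝ≥0) : Continuous (gaussianPDFReal m v) := by
  unfold gaussianPDFReal
  fun_prop

lemma integrable_gaussianPDFReal_comp {Ω : Type*} [MeasurableSpace Ω] {P : Measure Ω}
    [IsFiniteMeasure P] (m : ℝ) (v : ℝ≥0) {X : Ω → ℝ} (hX : AEMeasurable X P) :
    Integrable (fun ω ↦ gaussianPDFReal m v (X ω)) P := by
  refine .of_bound ((measurable_gaussianPDFReal m v).comp_aemeasurable hX).aestronglyMeasurable
    (√v)⁻¹ (ae_of_all _ fun ω ↦ ?_)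
  rw [Real.norm_of_nonneg (gaussianPDFReal_nonneg _ _ _)]
  exact gaussianPDFReal_le_inv_sqrt _ _ _

lemma gaussianPDFReal_mul_gaussianPDFReal {v s : ℝ≥0} (hv : v ≠ 0) (hs : s ≠ 0) (x z : ℝ) :
    gaussianPDFReal 0 s z * gaussianPDFReal 0 v (x + z) =
      gaussianPDFReal 0 (v + s) x * gaussianPDFReal (-(x * s / (v + s))) (v * s / (v + s)) z := by
  have hconst : (√(2 * Real.pi * s))⁻¹ * (√(2 * Real.pi * v))⁻¹ =
      (√(2 * Real.pi * (v + s)))⁻¹ * (√(2 * Real.pi * (v * s / (v + s))))⁻¹ := by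
    rw [← mul_inv, ← mul_inv, ← Real.sqrt_mul (by positivity), ← Real.sqrt_mul (by positivity)]
    congr 2
    field_simp
  have hexp : Real.exp (-(z - 0) ^ 2 / (2 * s)) * Real.exp (-(x + z - 0) ^ 2 / (2 * v)) =
      Real.exp (-(x - 0) ^ 2 / (2 * (v + s))) *
        Real.exp (-(z - -(x * s / (v + s))) ^ 2 / (2 * (v * s / (v + s)))) := by
    rw [← Real.exp_add, ← Real.exp_add]
    congr 1
    field_simp
    ring
  simp only [gaussianPDFReal, NNReal.coe_add, NNReal.coe_mul, NNReal.coe_div]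
  rw [mul_mul_mul_comm, hconst, hexp, mul_mul_mul_comm]

lemma integral_gaussianPDFReal_add {v : ℝ≥0} (hv : v ≠ 0) (s : ℝ≥0) (x : ℝ) :
    ∫ z, gaussianPDFReal 0 v (x + z) ∂(gaussianReal 0 s) = gaussianPDFReal 0 (v + s) x := by
  rcases eq_or_ne s 0 with rfl | hs
  · simp
  have hvs : v * s / (v + s) ≠ 0 := by positivity
  simp only [integral_gaussianReal_eq_integral_smul hs, smul_eq_mul,
    gaussianPDFReal_mul_gaussianPDFReal hv hs]
  rw [integral_const_mul, integral_gaussianPDFReal_eq_one _ hvs, mul_one]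

lemma gaussianPDFReal_le_gaussianPDFReal_self (m : ℝ) (v : ℝ≥0) (x : ℝ) :
    gaussianPDFReal m v x ≤ gaussianPDFReal m v m := by
  unfold gaussianPDFReal
  gcongr ?_ * Real.exp (?_ / _)
  simpa using sq_nonneg (x - m)

lemma gaussianPDFReal_lt_gaussianPDFReal_self {m : ℝ} {v : ℝ≥0} (hv : v ≠ 0) {x : ℝ}
    (hx : x ≠ m) : gaussianPDFReal m v x < gaussianPDFReal m v m := by
  unfold gaussianPDFReal
  gcongr ?_ * Real.exp (?_ / _)
  simpa using sq_pos_of_ne_zero (sub_ne_zero.2 hx)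

lemma integral_gaussianPDFReal_lt {ν : Measure ℝ} [IsProbabilityMeasure ν] {m : ℝ}
    (hν : ν ≠ Measure.dirac m) {v : ℝ≥0} (hv : v ≠ 0) :
    ∫ x, gaussianPDFReal m v x ∂ν < gaussianPDFReal m v m := by
  have hint : Integrable (gaussianPDFReal m v) ν :=
    integrable_gaussianPDFReal_comp m v aemeasurable_id
  have hgap_nonneg : ∀ x, 0 ≤ gaussianPDFReal m v m - gaussianPDFReal m v x :=
    fun x ↦ sub_nonneg.2 (gaussianPDFReal_le_gaussianPDFReal_self m v x)
  have hgap : ∫ x, gaussianPDFReal m v m - gaussianPDFReal m v x ∂ν =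
      gaussianPDFReal m v m - ∫ x, gaussianPDFReal m v x ∂ν := by
    rw [integral_sub (integrable_const _) hint]
    simp
  rw [← sub_pos, ← hgap]
  refine (integral_nonneg hgap_nonneg).lt_of_ne' fun hzero ↦ hν ?_
  have hae : ∀ᵐ x ∂ν, id x = m := by
    filter_upwards [(integral_eq_zero_iff_of_nonneg hgap_nonneg
      ((integrable_const _).sub hint)).1 hzero] with x hx
    by_contra hxm
    exact (sub_pos.2 (gaussianPDFReal_lt_gaussianPDFReal_self hv hxm)).ne' hx
  rw [← Measure.map_id (μ := ν), Measure.map_congr hae, Measure.map_const, measure_univ, one_smul]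

end Gaussian

section RandomWalk

variable {Ω : Type*} [MeasurableSpace Ω] {P : Measure Ω} {γ : Measure ℝ} {S : ℕ → Ω → ℝ}

/-- `S` is a random walk with step distribution `γ` and arbitrary starting point `S 0`: each step
has law `γ` and is independent of the past. Measurability everywhere (rather than almost
everywhere) costs nothing for the walks extracted from a good version of Brownian motion. -/
structure IsRandomWalk (γ : Measure ℝ) (S : ℕ → Ω → ℝ) (P : Measure Ω) : Prop where
  measurable : ∀ m, Measurable (S m)
  map_step : ∀ m, P.map (S (m + 1) - S m) = γ
  indepFun_step : ∀ m, IndepFun (fun ω (i : Fin (m + 1)) ↦ S i ω) (S (m + 1) - S m) P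

namespace IsRandomWalk

lemma lintegral_mul_step [IsProbabilityMeasure P] (hS : IsRandomWalk γ S P) (m : ℕ)
    {a : (Fin (m + 1) → ℝ) → ℝ≥0∞} (ha : Measurable a) {u : ℝ → ℝ≥0∞} (hu : Measurable u) :
    ∫⁻ ω, a (fun i ↦ S i ω) * u (S (m + 1) ω) ∂P =
      ∫⁻ ω, a (fun i ↦ S i ω) * ∫⁻ z, u (S m ω + z) ∂γ ∂P := by
  have hpast : Measurable fun ω (i : Fin (m + 1)) ↦ S i ω :=
    measurable_pi_lambda _ fun i ↦ hS.measurable i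
  have hstep : Measurable (S (m + 1) - S m) := (hS.measurable _).sub (hS.measurable _)
  have hγ : IsProbabilityMeasure γ := hS.map_step m ▸ Measure.isProbabilityMeasure_map
    hstep.aemeasurable
  let F : (Fin (m + 1) → ℝ) × ℝ → ℝ≥0∞ := fun q ↦ a q.1 * u (q.1 (Fin.last m) + q.2)
  have hF : Measurable F := by fun_prop
  calc ∫⁻ ω, a (fun i ↦ S i ω) * u (S (m + 1) ω) ∂P
      = ∫⁻ ω, F (fun i ↦ S i ω, (S (m + 1) - S m) ω) ∂P := by simp [F]
    _ = ∫⁻ q, F q ∂(P.map (fun ω (i : Fin (m + 1)) ↦ S i ω)).prod γ := by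
        rw [← hS.map_step m, ← (hS.indepFun_step m).map_prod_eq_prod_map_map hpast.aemeasurable
          hstep.aemeasurable, lintegral_map hF (hpast.prodMk hstep)]
    _ = ∫⁻ ω, ∫⁻ z, F (fun i ↦ S i ω, z) ∂γ ∂P := by
        rw [lintegral_prod _ hF.aemeasurable, lintegral_map hF.lintegral_prod_right' hpast]
    _ = ∫⁻ ω, a (fun i ↦ S i ω) * ∫⁻ z, u (S m ω + z) ∂γ ∂P := by
        simp only [F, Fin.val_last]
        congr with ω
        exact lintegral_const_mul _ (by fun_prop)

/-- Discrete Feynman–Kac bound (Khasminskii): `n ↦ (∏_{j < n} f (S j)) * u n (S n)` is a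
supermartingale. -/
lemma lintegral_prod_mul_le [IsProbabilityMeasure P] (hS : IsRandomWalk γ S P)
    {f : ℝ → ℝ≥0∞} (hf : Measurable f) {u : ℕ → ℝ → ℝ≥0∞} (hu : ∀ n, Measurable (u n)) {N : ℕ}
    (hsuper : ∀ n < N, ∀ x, f x * ∫⁻ z, u (n + 1) (x + z) ∂γ ≤ u n x) :
    ∫⁻ ω, (∏ j ∈ Finset.range N, f (S j ω)) * u N (S N ω) ∂P ≤ ∫⁻ ω, u 0 (S 0 ω) ∂P := by
  induction N with
  | zero => simp
  | succ n ih =>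
    let a : (Fin (n + 1) → ℝ) → ℝ≥0∞ := fun q ↦ ∏ j : Fin (n + 1), f (q j)
    have ha : Measurable a := by fun_prop
    have hprod : ∀ ω, a (fun i ↦ S i ω) = ∏ j ∈ Finset.range (n + 1), f (S j ω) :=
      fun ω ↦ (Finset.prod_range fun j ↦ f (S j ω)).symm
    calc ∫⁻ ω, (∏ j ∈ Finset.range (n + 1), f (S j ω)) * u (n + 1) (S (n + 1) ω) ∂P
        = ∫⁻ ω, (∏ j ∈ Finset.range (n + 1), f (S j ω)) * ∫⁻ z, u (n + 1) (S n ω + z) ∂γ ∂P := by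
          simpa only [hprod] using hS.lintegral_mul_step n ha (hu (n + 1))
      _ ≤ ∫⁻ ω, (∏ j ∈ Finset.range n, f (S j ω)) * u n (S n ω) ∂P := by
          refine lintegral_mono fun ω ↦ ?_
          rw [Finset.prod_range_succ, mul_assoc]
          gcongr
          exact hsuper n n.lt_succ_self _
      _ ≤ ∫⁻ ω, u 0 (S 0 ω) ∂P := ih fun k hk ↦ hsuper k (hk.trans n.lt_succ_self)

end IsRandomWalk

/-- The supersolution `1 + 2μ ∑_{j < m} p_{j + 1}`, with `p_v` the centred Gaussian density of
variance `v`: up to the factor `2μ`, the sum is the expected amount of potential `p₁` collected in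
`m` steps by the standard Gaussian random walk. -/
noncomputable def occupationSupersolution (μ : ℝ) (m : ℕ) (x : ℝ) : ℝ :=
  1 + 2 * μ * ∑ j ∈ Finset.range m, gaussianPDFReal 0 (j + 1) x

lemma one_le_occupationSupersolution {μ : ℝ} (hμ : 0 ≤ μ) (m : ℕ) (x : ℝ) :
    1 ≤ occupationSupersolution μ m x :=
  le_add_of_nonneg_right (mul_nonneg (by positivity)
    (Finset.sum_nonneg fun _ _ ↦ gaussianPDFReal_nonneg _ _ _))

lemma sum_inv_sqrt_le (m : ℕ) : ∑ j ∈ Finset.range m, (√(j + 1 : ℝ))⁻¹ ≤ 2 * √m := by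
  suffices hstep : ∀ j : ℕ, (√(j + 1 : ℝ))⁻¹ ≤ 2 * √((j + 1 : ℕ) : ℝ) - 2 * √j by
    refine (Finset.sum_le_sum fun j _ ↦ hstep j).trans_eq ?_
    rw [Finset.sum_range_sub fun j : ℕ ↦ 2 * √(j : ℝ)]
    simp
  intro j
  push_cast
  have hj : √(j : ℝ) ^ 2 = j := Real.sq_sqrt (by positivity)
  have hj1 : √(j + 1 : ℝ) ^ 2 = j + 1 := Real.sq_sqrt (by positivity)
  rw [inv_le_iff_one_le_mul₀ (by positivity)]
  nlinarith [sq_nonneg (√(j + 1 : ℝ) - √(j : ℝ))]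

lemma occupationSupersolution_le_two {μ : ℝ} (hμ : 0 ≤ μ) {m : ℕ} (hm : 4 * μ * √m ≤ 1) (x : ℝ) :
    occupationSupersolution μ m x ≤ 2 := by
  calc occupationSupersolution μ m x
      ≤ 1 + 2 * μ * (2 * √m) := by
        unfold occupationSupersolution
        gcongr
        refine (Finset.sum_le_sum fun j _ ↦ ?_).trans (sum_inv_sqrt_le m)
        simpa using gaussianPDFReal_le_inv_sqrt 0 (j + 1) x
    _ ≤ 2 := by linarith

lemma continuous_occupationSupersolution (μ : ℝ) (m : ℕ) :
    Continuous (occupationSupersolution μ m) := by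
  have := fun v ↦ continuous_gaussianPDFReal 0 v
  unfold occupationSupersolution
  fun_prop

lemma integral_occupationSupersolution_add (μ : ℝ) (m : ℕ) (x : ℝ) :
    ∫ z, occupationSupersolution μ m (x + z) ∂(gaussianReal 0 1) =
      occupationSupersolution μ (m + 1) x - 2 * μ * gaussianPDFReal 0 1 x := by
  have hint : ∀ j : ℕ, Integrable (fun z ↦ gaussianPDFReal 0 (j + 1) (x + z)) (gaussianReal 0 1) :=
    fun j ↦ integrable_gaussianPDFReal_comp _ _ (by fun_prop)
  have hconv : ∀ j : ℕ, ∫ z, gaussianPDFReal 0 (j + 1) (x + z) ∂(gaussianReal 0 1) =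
      gaussianPDFReal 0 ((j + 1 : ℕ) + 1) x := fun j ↦ by
    rw [integral_gaussianPDFReal_add (by positivity), Nat.cast_add_one]
  unfold occupationSupersolution
  rw [integral_add (integrable_const _) ((integrable_finsetSum _ fun j _ ↦ hint j).const_mul _),
    integral_const_mul, integral_finsetSum _ fun j _ ↦ hint j, Finset.sum_range_succ']
  simp only [hconv, integral_const, probReal_univ, one_smul, Nat.cast_zero, zero_add]
  ring

lemma exp_mul_integral_occupationSupersolution_le {μ : ℝ} (hμ : 0 ≤ μ) {m : ℕ}
    (hm : 4 * μ * √(m + 1 : ℕ) ≤ 1) (x : ℝ) :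
    Real.exp (μ * gaussianPDFReal 0 1 x) *
        ∫ z, occupationSupersolution μ m (x + z) ∂(gaussianReal 0 1) ≤
      occupationSupersolution μ (m + 1) x := by
  have hle := occupationSupersolution_le_two hμ hm x
  have hpot : 0 ≤ μ * gaussianPDFReal 0 1 x := mul_nonneg hμ (gaussianPDFReal_nonneg _ _ _)
  have hnonneg : 0 ≤ occupationSupersolution μ (m + 1) x :=
    zero_le_one.trans (one_le_occupationSupersolution hμ _ x)
  rw [integral_occupationSupersolution_add]
  generalize occupationSupersolution μ (m + 1) x = h at *
  generalize hy : μ * gaussianPDFReal 0 1 x = y at *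
  calc Real.exp y * (h - 2 * μ * gaussianPDFReal 0 1 x)
      = Real.exp y * (h - 2 * y) := by rw [← hy]; ring
    _ ≤ Real.exp y * (h * Real.exp (-y)) := by
        gcongr
        nlinarith [Real.one_sub_le_exp_neg y]
    _ = h := by rw [mul_left_comm, ← Real.exp_add, add_neg_cancel, Real.exp_zero, mul_one]

lemma exp_mul_lintegral_occupationSupersolution_le {μ : ℝ} (hμ : 0 ≤ μ) {m : ℕ}
    (hm : 4 * μ * √(m + 1 : ℕ) ≤ 1) (x : ℝ) :
    ENNReal.ofReal (Real.exp (μ * gaussianPDFReal 0 1 x)) *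
        ∫⁻ z, ENNReal.ofReal (occupationSupersolution μ m (x + z)) ∂(gaussianReal 0 1) ≤
      ENNReal.ofReal (occupationSupersolution μ (m + 1) x) := by
  have hnonneg : ∀ y, 0 ≤ occupationSupersolution μ m y := fun y ↦
    zero_le_one.trans (one_le_occupationSupersolution hμ m y)
  have hm' : 4 * μ * √m ≤ 1 := (by gcongr; omega : _ ≤ 4 * μ * √(m + 1 : ℕ)).trans hm
  have hint : Integrable (fun z ↦ occupationSupersolution μ m (x + z)) (gaussianReal 0 1) := by
    refine .of_bound (by have := continuous_occupationSupersolution μ m; fun_prop) 2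
      (ae_of_all _ fun z ↦ ?_)
    rw [Real.norm_of_nonneg (hnonneg _)]
    exact occupationSupersolution_le_two hμ hm' _
  rw [← ofReal_integral_eq_lintegral_ofReal hint (ae_of_all _ fun z ↦ hnonneg _),
    ← ENNReal.ofReal_mul (Real.exp_nonneg _)]
  exact ENNReal.ofReal_le_ofReal (exp_mul_integral_occupationSupersolution_le hμ hm x)

lemma IsRandomWalk.lintegral_exp_sum_gaussianPDFReal_le [IsProbabilityMeasure P]
    (hS : IsRandomWalk (gaussianReal 0 1) S P) {μ : ℝ} (hμ : 0 ≤ μ) {N : ℕ}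
    (hN : 4 * μ * √N ≤ 1) :
    ∫⁻ ω, ENNReal.ofReal (Real.exp (μ * ∑ j ∈ Finset.range N, gaussianPDFReal 0 1 (S j ω))) ∂P ≤
      2 := by
  let f : ℝ → ℝ≥0∞ := fun x ↦ ENNReal.ofReal (Real.exp (μ * gaussianPDFReal 0 1 x))
  let u : ℕ → ℝ → ℝ≥0∞ := fun n x ↦ ENNReal.ofReal (occupationSupersolution μ (N - n) x)
  have hf : Measurable f := by fun_prop
  have hu : ∀ n, Measurable (u n) := fun n ↦
    (continuous_occupationSupersolution μ _).measurable.ennreal_ofReal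
  have hmono : ∀ m ≤ N, 4 * μ * √m ≤ 1 := fun m hm ↦ (by gcongr : _ ≤ 4 * μ * √N).trans hN
  have hsuper : ∀ n < N, ∀ x, f x * ∫⁻ z, u (n + 1) (x + z) ∂(gaussianReal 0 1) ≤ u n x := by
    intro n hn x
    have hsub : N - n = N - (n + 1) + 1 := by omega
    simp only [f, u, hsub]
    exact exp_mul_lintegral_occupationSupersolution_le hμ (hmono _ (by omega)) x
  calc ∫⁻ ω, ENNReal.ofReal (Real.exp (μ * ∑ j ∈ Finset.range N, gaussianPDFReal 0 1 (S j ω))) ∂P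
      = ∫⁻ ω, (∏ j ∈ Finset.range N, f (S j ω)) * u N (S N ω) ∂P := by
        congr with ω
        simp [f, u, occupationSupersolution, Finset.mul_sum, Real.exp_sum,
          ENNReal.ofReal_prod_of_nonneg, Real.exp_nonneg]
    _ ≤ ∫⁻ ω, u 0 (S 0 ω) ∂P := hS.lintegral_prod_mul_le hf hu hsuper
    _ ≤ ∫⁻ _, 2 ∂P := by
        refine lintegral_mono fun ω ↦ ?_
        simpa [u] using ENNReal.ofReal_le_ofReal (occupationSupersolution_le_two hμ hN (S 0 ω))
    _ = 2 := by simp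

end RandomWalk

section Brownian

variable {Ω : Type*} [MeasurableSpace Ω] {P : Measure Ω} {B W : ℝ → Ω → ℝ}

/-- A two-sided Brownian motion all of whose paths are continuous and all of whose values are
measurable: a good version, for which no null set has to be discarded in pathwise arguments. -/
structure IsContinuousTwoSidedBM (P : Measure Ω) (B : ℝ → Ω → ℝ) : Prop
    extends IsTwoSidedBM P B where
  measurable : ∀ t, Measurable (B t)
  continuous : ∀ ω, Continuous fun t ↦ B t ω

lemma IsTwoSidedBM.congr (hB : IsTwoSidedBM P B) (h : ∀ᵐ ω ∂P, ∀ t, B t ω = W t ω) :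
    IsTwoSidedBM P W where
  aemeas t := (hB.aemeas t).congr (h.mono fun ω hω ↦ hω t)
  cont := by
    filter_upwards [h, hB.cont] with ω hBW hcont
    simpa only [hBW] using hcont
  zero := by
    filter_upwards [h, hB.zero] with ω hBW hzero
    rw [← hBW, hzero]
  indepIncr n t ht := by
    refine iIndepFun.congr (fun i ↦ ?_) (hB.indepIncr n t ht)
    filter_upwards [h] with ω hBW
    simp only [hBW]
  gaussIncr s t hst := by
    rw [← hB.gaussIncr s t hst]
    refine Measure.map_congr ?_
    filter_upwards [h] with ω hBW
    simp only [hBW]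

lemma measurable_of_forall_rat {W : ℝ → Ω → ℝ} (hcont : ∀ ω, Continuous fun t ↦ W t ω)
    (hrat : ∀ q : ℚ, Measurable (W q)) (t : ℝ) : Measurable (W t) := by
  obtain ⟨u, -, -, hu⟩ := (Rat.denseRange_cast (𝕜 := ℝ)).exists_seq_strictMono_tendsto
    Rat.cast_mono t
  exact measurable_of_tendsto_metrizable (fun n ↦ hrat (u n))
    (tendsto_pi_nhds.2 fun ω ↦ ((hcont ω).tendsto t).comp hu)

lemma IsTwoSidedBM.exists_isContinuousTwoSidedBM (hB : IsTwoSidedBM P B) :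
    ∃ W, IsContinuousTwoSidedBM P W ∧ ∀ᵐ ω ∂P, ∀ t, B t ω = W t ω := by
  classical
  have hgood : ∀ᵐ ω ∂P, (Continuous fun t ↦ B t ω) ∧
      ∀ q : ℚ, B q ω = (hB.aemeas q).mk _ ω :=
    hB.cont.and (ae_all_iff.2 fun q ↦ (hB.aemeas q).ae_eq_mk)
  obtain ⟨N, hNsub, hNmeas, hN⟩ := exists_measurable_superset_of_null (ae_iff.1 hgood)
  have hgood' : ∀ ω ∉ N, (Continuous fun t ↦ B t ω) ∧ ∀ q : ℚ, B q ω = (hB.aemeas q).mk _ ω :=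
    fun ω hω ↦ not_not.1 fun hbad ↦ hω (hNsub hbad)
  let W : ℝ → Ω → ℝ := fun t ω ↦ if ω ∈ N then 0 else B t ω
  have hcont : ∀ ω, Continuous fun t ↦ W t ω := by
    intro ω
    by_cases hω : ω ∈ N
    · simpa [W, hω] using continuous_const
    · simpa [W, hω] using (hgood' ω hω).1
  have hrat : ∀ q : ℚ, Measurable (W q) := by
    intro q
    have hW : W q = fun ω ↦ if ω ∈ N then 0 else (hB.aemeas q).mk _ ω :=
      funext fun ω ↦ ite_congr rfl (fun _ ↦ rfl) fun hω ↦ (hgood' ω hω).2 q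
    exact hW ▸ measurable_const.ite hNmeas (hB.aemeas q).measurable_mk
  have hBW : ∀ᵐ ω ∂P, ∀ t, B t ω = W t ω := by
    filter_upwards [measure_eq_zero_iff_ae_notMem.1 hN] with ω hω t
    simp [W, hω]
  exact ⟨W, ⟨hB.congr hBW, measurable_of_forall_rat hcont hrat, hcont⟩, hBW⟩

lemma IsTwoSidedBM.reflect (hB : IsTwoSidedBM P B) : IsTwoSidedBM P fun t ↦ B (-t) where
  aemeas t := hB.aemeas _
  cont := hB.cont.mono fun _ hcont ↦ hcont.comp continuous_neg
  zero := by simpa using hB.zero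
  indepIncr n t ht := by
    have hrev : Monotone fun i : Fin (n + 1) ↦ -t i.rev :=
      fun i j hij ↦ neg_le_neg (ht (Fin.rev_le_rev.2 hij))
    have hindep := ((hB.indepIncr n _ hrev).precomp Fin.rev_injective).comp (fun _ x ↦ -x)
      (fun _ ↦ measurable_neg)
    convert hindep using 2 with i
    funext ω
    simp [Fin.rev_succ, Fin.rev_castSucc]
  gaussIncr s t hst := by
    have hneg : (fun ω ↦ B (-t) ω - B (-s) ω) = Neg.neg ∘ fun ω ↦ B (-s) ω - B (-t) ω := by
      funext ω; simp
    have hmeas : AEMeasurable (fun ω ↦ B (-s) ω - B (-t) ω) P := (hB.aemeas _).sub (hB.aemeas _)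
    rw [hneg, ← AEMeasurable.map_map_of_aemeasurable measurable_neg.aemeasurable hmeas,
      hB.gaussIncr (-t) (-s) (neg_lt_neg hst)]
    simpa [neg_add_eq_sub] using gaussianReal_map_neg (μ := 0) (v := (t - s).toNNReal)

lemma IsContinuousTwoSidedBM.reflect (hB : IsContinuousTwoSidedBM P B) :
    IsContinuousTwoSidedBM P fun t ↦ B (-t) where
  toIsTwoSidedBM := hB.toIsTwoSidedBM.reflect
  measurable _ := hB.measurable _
  continuous ω := (hB.continuous ω).comp continuous_neg

variable [IsProbabilityMeasure P]

lemma IsTwoSidedBM.isPreBrownianReal (hB : IsTwoSidedBM P B) :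
    IsPreBrownianReal (fun t : ℝ≥0 ↦ B t) P := by
  refine HasIndepIncrements.isPreBrownianReal_of_hasLaw (fun t ↦ ⟨hB.aemeas t, ?_⟩)
    fun n t ht ↦ hB.indepIncr n _ (NNReal.coe_mono.comp ht)
  rcases eq_or_ne t 0 with rfl | ht
  · rw [gaussianReal_zero_var, NNReal.coe_zero, Measure.map_congr (g := fun _ ↦ 0) hB.zero,
      Measure.map_const, measure_univ, one_smul]
  · have hincr : (fun ω ↦ B t ω - B 0 ω) =ᵐ[P] B t := by
      filter_upwards [hB.zero] with ω hzero
      rw [hzero, sub_zero]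
    rw [← Measure.map_congr hincr, hB.gaussIncr 0 t (by positivity), sub_zero,
      Real.toNNReal_coe]

lemma IsTwoSidedBM.map_eval (hB : IsTwoSidedBM P B) (s : ℝ) :
    P.map (B s) = gaussianReal 0 ‖s‖₊ := by
  rcases le_total 0 s with hs | hs
  · simpa [abs_of_nonneg hs] using (hB.isPreBrownianReal.hasLaw_eval ‖s‖₊).map_eq
  · simpa [abs_of_nonpos hs] using (hB.reflect.isPreBrownianReal.hasLaw_eval ‖s‖₊).map_eq

lemma IsContinuousTwoSidedBM.isRandomWalk (hB : IsContinuousTwoSidedBM P B) {r : ℝ} (hr : 0 ≤ r) :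
    IsRandomWalk (gaussianReal 0 1) (fun m : ℕ ↦ B (r + m)) P where
  measurable m := hB.measurable _
  map_step m := by
    have hincr := hB.gaussIncr (r + m) (r + (m + 1 : ℕ)) (by simp)
    rwa [show r + (m + 1 : ℕ) - (r + m) = 1 by push_cast; ring, Real.toNNReal_one] at hincr
  indepFun_step m := by
    lift r to ℝ≥0 using hr
    have hmarkov := hB.isPreBrownianReal.indepFun_shift (r + m)
    have hpast : ∀ i : Fin (m + 1), r + (i : ℕ) ∈ Set.Iic (r + m : ℝ≥0) := fun i ↦
      add_le_add_right (Nat.cast_le.2 (Nat.lt_succ_iff.1 i.2)) r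
    have hstep : (B (r + (m + 1 : ℕ)) - B (r + m) : Ω → ℝ) =
        fun ω ↦ B (r + m + 1 : ℝ≥0) ω - B (r + m : ℝ≥0) ω := by
      funext ω
      simp [add_assoc]
    rw [hstep]
    exact (hmarkov.comp (measurable_pi_apply 1) (measurable_pi_lambda
      (fun (w : Set.Iic (r + m : ℝ≥0) → ℝ) (i : Fin (m + 1)) ↦ w ⟨_, hpast i⟩)
      fun i ↦ measurable_pi_apply _)).symm

end Brownian

section Occupation

lemma intervalIntegral_eq_intervalIntegral_sum {g : ℝ → ℝ} (hg : Continuous g) (N : ℕ) :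
    ∫ s in (0 : ℝ)..N, g s = ∫ r in (0 : ℝ)..1, ∑ j ∈ Finset.range N, g (r + j) := by
  have hint : ∀ j ∈ Finset.range N, IntervalIntegrable (fun r ↦ g (r + j)) volume 0 1 :=
    fun j _ ↦ (hg.comp (continuous_add_const _)).intervalIntegrable _ _
  have hshift : ∀ j : ℕ, ∫ r in (0 : ℝ)..1, g (r + j) = ∫ s in (j : ℝ)..(j + 1 : ℕ), g s :=
    fun j ↦ by simp [add_comm]
  rw [intervalIntegral.integral_finsetSum hint]
  simp only [hshift]
  rw [intervalIntegral.sum_integral_adjacent_intervals fun j _ ↦ hg.intervalIntegrable _ _,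
    Nat.cast_zero]

lemma ofReal_exp_intervalIntegral_le {h : ℝ → ℝ} (hh : Continuous h) :
    ENNReal.ofReal (Real.exp (∫ r in (0 : ℝ)..1, h r)) ≤
      ∫⁻ r in Set.Ioc (0 : ℝ) 1, ENNReal.ofReal (Real.exp (h r)) := by
  have : IsProbabilityMeasure (volume.restrict (Set.Ioc (0 : ℝ) 1)) := ⟨by simp⟩
  have hint : ∀ g : ℝ → ℝ, Continuous g → IntegrableOn g (Set.Ioc 0 1) := fun g hg ↦
    (intervalIntegrable_iff_integrableOn_Ioc_of_le zero_le_one).1 (hg.intervalIntegrable 0 1)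
  have hexp : Continuous fun r ↦ Real.exp (h r) := Real.continuous_exp.comp hh
  rw [intervalIntegral.integral_of_le zero_le_one, ← ofReal_integral_eq_lintegral_ofReal
    (hint _ hexp) (ae_of_all _ fun r ↦ Real.exp_nonneg _)]
  exact ENNReal.ofReal_le_ofReal (convexOn_exp.map_integral_le Real.continuous_exp.continuousOn
    isClosed_univ (ae_of_all _ fun _ ↦ Set.mem_univ _) (hint h hh) (hint _ hexp))

lemma exp_add_le_inv_two_mul (a b : ℝ) :
    Real.exp (a + b) ≤ 2⁻¹ * (Real.exp (2 * a) + Real.exp (2 * b)) := by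
  rw [Real.exp_add, two_mul a, two_mul b, Real.exp_add, Real.exp_add]
  nlinarith [sq_nonneg (Real.exp a - Real.exp b)]

variable {Ω : Type*} [MeasurableSpace Ω]

lemma measurable_intervalIntegral {F : ℝ → Ω → ℝ} (hcont : ∀ ω, Continuous fun s ↦ F s ω)
    (hmeas : ∀ s, Measurable (F s)) (a b : ℝ) : Measurable fun ω ↦ ∫ s in a..b, F s ω := by
  have hF : StronglyMeasurable fun q : Ω × ℝ ↦ F q.2 q.1 :=
    ((measurable_uncurry_of_continuous_of_measurable hcont hmeas).comp
      measurable_swap).stronglyMeasurable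
  simp only [intervalIntegral]
  exact hF.integral_prod_right.measurable.sub hF.integral_prod_right.measurable

lemma lintegral_exp_intervalIntegral_le_of_forall_le {P : Measure Ω} [SFinite P]
    {F : ℝ → Ω → ℝ} (hcont : ∀ ω, Continuous fun r ↦ F r ω) (hmeas : ∀ r, Measurable (F r))
    {C : ℝ≥0∞} (hC : ∀ r ∈ Set.Ioc (0 : ℝ) 1, ∫⁻ ω, ENNReal.ofReal (Real.exp (F r ω)) ∂P ≤ C) :
    ∫⁻ ω, ENNReal.ofReal (Real.exp (∫ r in (0 : ℝ)..1, F r ω)) ∂P ≤ C := by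
  have hjoint : Measurable fun q : Ω × ℝ ↦ ENNReal.ofReal (Real.exp (F q.2 q.1)) :=
    ((measurable_uncurry_of_continuous_of_measurable hcont hmeas).comp
      measurable_swap).exp.ennreal_ofReal
  calc ∫⁻ ω, ENNReal.ofReal (Real.exp (∫ r in (0 : ℝ)..1, F r ω)) ∂P
      ≤ ∫⁻ ω, (∫⁻ r in Set.Ioc (0 : ℝ) 1, ENNReal.ofReal (Real.exp (F r ω))) ∂P :=
        lintegral_mono fun ω ↦ ofReal_exp_intervalIntegral_le (hcont ω)
    _ = ∫⁻ r in Set.Ioc (0 : ℝ) 1, ∫⁻ ω, ENNReal.ofReal (Real.exp (F r ω)) ∂P :=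
        lintegral_lintegral_swap hjoint.aemeasurable
    _ ≤ ∫⁻ _ in Set.Ioc (0 : ℝ) 1, C := setLIntegral_mono measurable_const hC
    _ = C := by simp

/-- The occupation functional `∫_{-t}^t φ(w s) ds` of a path `w` on `[-t, t]`, with `φ` the standard
Gaussian density: a smoothed version of the local time of `w` at `0`. -/
noncomputable def gaussianOccupation (t : ℝ) (w : ℝ → ℝ) : ℝ :=
  ∫ s in (-t)..t, gaussianPDFReal 0 1 (w s)

variable {P : Measure Ω} {B : ℝ → Ω → ℝ}

namespace IsContinuousTwoSidedBM

lemma continuous_gaussianPDFReal_comp (hB : IsContinuousTwoSidedBM P B) (ω : Ω) :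
    Continuous fun s ↦ gaussianPDFReal 0 1 (B s ω) :=
  (continuous_gaussianPDFReal 0 1).comp (hB.continuous ω)

lemma measurable_gaussianPDFReal_comp (hB : IsContinuousTwoSidedBM P B) (s : ℝ) :
    Measurable fun ω ↦ gaussianPDFReal 0 1 (B s ω) :=
  (measurable_gaussianPDFReal 0 1).comp (hB.measurable s)

lemma measurable_gaussianOccupation (hB : IsContinuousTwoSidedBM P B) (t : ℝ) :
    Measurable fun ω ↦ gaussianOccupation t fun s ↦ B s ω :=
  measurable_intervalIntegral hB.continuous_gaussianPDFReal_comp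
    hB.measurable_gaussianPDFReal_comp _ _

lemma gaussianOccupation_eq_add (hB : IsContinuousTwoSidedBM P B) (t : ℝ) (ω : Ω) :
    gaussianOccupation t (fun s ↦ B s ω) = (∫ s in (0 : ℝ)..t, gaussianPDFReal 0 1 (B s ω)) +
      ∫ s in (0 : ℝ)..t, gaussianPDFReal 0 1 (B (-s) ω) := by
  have hcont := hB.continuous_gaussianPDFReal_comp ω
  rw [gaussianOccupation, ← intervalIntegral.integral_add_adjacent_intervals
      (hcont.intervalIntegrable (-t) 0) (hcont.intervalIntegrable 0 t), add_comm,
    intervalIntegral.integral_comp_neg fun s ↦ gaussianPDFReal 0 1 (B s ω), neg_zero]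

variable [IsProbabilityMeasure P]

lemma lintegral_exp_intervalIntegral_le (hB : IsContinuousTwoSidedBM P B) {μ : ℝ} (hμ : 0 ≤ μ)
    {N : ℕ} (hN : 4 * μ * √N ≤ 1) :
    ∫⁻ ω, ENNReal.ofReal (Real.exp (μ * ∫ s in (0 : ℝ)..N, gaussianPDFReal 0 1 (B s ω))) ∂P ≤
      2 := by
  let S : ℝ → Ω → ℝ := fun r ω ↦ μ * ∑ j ∈ Finset.range N, gaussianPDFReal 0 1 (B (r + j) ω)
  have hScont : ∀ ω, Continuous fun r ↦ S r ω := fun ω ↦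
    (continuous_finsetSum _ fun j _ ↦
      (hB.continuous_gaussianPDFReal_comp ω).comp (continuous_add_const _)).const_mul μ
  have hSmeas : ∀ r, Measurable (S r) := fun r ↦
    (Finset.measurable_fun_sum _ fun j _ ↦ hB.measurable_gaussianPDFReal_comp _).const_mul μ
  have hS : ∀ ω, μ * ∫ s in (0 : ℝ)..N, gaussianPDFReal 0 1 (B s ω) =
      ∫ r in (0 : ℝ)..1, S r ω := fun ω ↦ by
    rw [intervalIntegral_eq_intervalIntegral_sum (hB.continuous_gaussianPDFReal_comp ω),
      intervalIntegral.integral_const_mul]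
  simp only [hS]
  exact lintegral_exp_intervalIntegral_le_of_forall_le hScont hSmeas fun r hr ↦
    (hB.isRandomWalk hr.1.le).lintegral_exp_sum_gaussianPDFReal_le hμ hN

lemma lintegral_exp_gaussianOccupation_le (hB : IsContinuousTwoSidedBM P B) {κ : ℝ} (hκ : 0 ≤ κ)
    {N : ℕ} (hN : 8 * κ * √N ≤ 1) :
    ∫⁻ ω, ENNReal.ofReal (Real.exp (κ * gaussianOccupation N fun s ↦ B s ω)) ∂P ≤ 2 := by
  let E (V : ℝ → Ω → ℝ) (ω : Ω) : ℝ≥0∞ :=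
    ENNReal.ofReal (Real.exp (2 * κ * ∫ s in (0 : ℝ)..N, gaussianPDFReal 0 1 (V s ω)))
  have hE : ∀ V, IsContinuousTwoSidedBM P V → ∫⁻ ω, E V ω ∂P ≤ 2 := fun V hV ↦
    hV.lintegral_exp_intervalIntegral_le (by positivity) (by linarith)
  have hEmeas : Measurable (E B) :=
    ((measurable_intervalIntegral hB.continuous_gaussianPDFReal_comp
      hB.measurable_gaussianPDFReal_comp _ _).const_mul _).exp.ennreal_ofReal
  have hpath : ∀ ω, ENNReal.ofReal (Real.exp (κ * gaussianOccupation N fun s ↦ B s ω)) ≤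
      ENNReal.ofReal 2⁻¹ * (E B ω + E (fun t ↦ B (-t)) ω) := fun ω ↦ by
    simp only [E]
    rw [← ENNReal.ofReal_add (Real.exp_nonneg _) (Real.exp_nonneg _),
      ← ENNReal.ofReal_mul (by norm_num), hB.gaussianOccupation_eq_add, mul_add κ]
    exact ENNReal.ofReal_le_ofReal (by simpa only [mul_assoc] using exp_add_le_inv_two_mul _ _)
  calc ∫⁻ ω, ENNReal.ofReal (Real.exp (κ * gaussianOccupation N fun s ↦ B s ω)) ∂P
      ≤ ∫⁻ ω, ENNReal.ofReal 2⁻¹ * (E B ω + E (fun t ↦ B (-t)) ω) ∂P := lintegral_mono hpath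
    _ = ENNReal.ofReal 2⁻¹ * (∫⁻ ω, E B ω ∂P + ∫⁻ ω, E (fun t ↦ B (-t)) ω ∂P) := by
        rw [lintegral_const_mul' _ _ ENNReal.ofReal_ne_top, lintegral_add_left hEmeas]
    _ ≤ ENNReal.ofReal 2⁻¹ * (2 + 2) := by
        gcongr
        exacts [hE B hB, hE _ hB.reflect]
    _ = 2 := by
        rw [← ENNReal.ofReal_ofNat, ← ENNReal.ofReal_add (by norm_num) (by norm_num),
          ← ENNReal.ofReal_mul (by norm_num)]
        norm_num

lemma integrable_exp_gaussianOccupation (hB : IsContinuousTwoSidedBM P B) {κ : ℝ} (hκ : 0 ≤ κ)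
    {N : ℕ} (hN : 8 * κ * √N ≤ 1) :
    Integrable (fun ω ↦ Real.exp (κ * gaussianOccupation N fun s ↦ B s ω)) P := by
  refine ⟨((hB.measurable_gaussianOccupation N).const_mul κ).exp.aestronglyMeasurable, ?_⟩
  rw [hasFiniteIntegral_iff_ofReal (ae_of_all _ fun _ ↦ Real.exp_nonneg _)]
  exact (hB.lintegral_exp_gaussianOccupation_le hκ hN).trans_lt (by norm_num)

lemma integral_exp_gaussianOccupation_le (hB : IsContinuousTwoSidedBM P B) {κ : ℝ} (hκ : 0 ≤ κ)
    {N : ℕ} (hN : 8 * κ * √N ≤ 1) :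
    ∫ ω, Real.exp (κ * gaussianOccupation N fun s ↦ B s ω) ∂P ≤ 2 := by
  rw [integral_eq_lintegral_of_nonneg_ae (ae_of_all _ fun _ ↦ Real.exp_nonneg _)
    (hB.integrable_exp_gaussianOccupation hκ hN).aestronglyMeasurable]
  exact ENNReal.toReal_le_of_le_ofReal (by norm_num)
    (by simpa using hB.lintegral_exp_gaussianOccupation_le hκ hN)

end IsContinuousTwoSidedBM

end Occupation

section Tent

/-- The triangular weight of height `1` supported on `[-t, t]`. It is `t⁻¹`-Lipschitz, which makes
weighted occupations insensitive to shifts that are short compared with `t`. -/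
noncomputable def tent (t s : ℝ) : ℝ := max 0 (1 - |s| / t)

lemma tent_nonneg (t s : ℝ) : 0 ≤ tent t s := le_max_left _ _

lemma tent_le_one {t : ℝ} (ht : 0 ≤ t) (s : ℝ) : tent t s ≤ 1 :=
  max_le zero_le_one (sub_le_self _ (by positivity))

lemma tent_pos {t s : ℝ} (ht : 0 < t) (hs : |s| < t) : 0 < tent t s :=
  lt_max_of_lt_right (sub_pos.2 ((div_lt_one ht).2 hs))

lemma tent_eq_zero {t s : ℝ} (ht : 0 < t) (hs : t ≤ |s|) : tent t s = 0 :=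
  max_eq_left (sub_nonpos.2 ((one_le_div ht).2 hs))

lemma tent_mono {t u : ℝ} (ht : 0 < t) (htu : t ≤ u) (s : ℝ) : tent t s ≤ tent u s := by
  unfold tent
  gcongr

lemma continuous_tent (t : ℝ) : Continuous (tent t) := by
  unfold tent
  fun_prop

lemma integrable_tent_mul {t : ℝ} (ht : 0 < t) {g : ℝ → ℝ} (hg : Continuous g) :
    Integrable fun s ↦ tent t s * g s := by
  have hsupp : HasCompactSupport (tent t) := by
    refine HasCompactSupport.of_support_subset_isCompact (isCompact_Icc (a := -t) (b := t))
      fun s hs ↦ abs_le.1 ?_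
    by_contra! hts
    exact hs (tent_eq_zero ht hts.le)
  exact ((continuous_tent t).mul hg).integrable_of_hasCompactSupport hsupp.mul_right

lemma tent_sub_tent_le {t : ℝ} (ht : 0 < t) (r s : ℝ) :
    tent t s - tent t (s - r) ≤ min (|r| / t) 1 := by
  refine le_min ?_ (by linarith [tent_le_one ht.le s, tent_nonneg t (s - r)])
  have hlip : |s - r| / t ≤ |s| / t + |r| / t := by
    rw [← add_div]
    gcongr
    exact abs_sub _ _
  have htent : 1 - |s - r| / t ≤ tent t (s - r) := le_max_right _ _
  rw [sub_le_iff_le_add]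
  exact max_le (add_nonneg (by positivity) (tent_nonneg _ _)) (by linarith)

lemma integral_tent_mul_sub_le {t : ℝ} (ht : 0 < t) {g : ℝ → ℝ} (hg : Continuous g)
    (hg_nonneg : ∀ s, 0 ≤ g s) (r : ℝ) :
    (∫ s, tent t s * g s) - ∫ s, tent t s * g (r + s) ≤
      min (|r| / t) 1 * ∫ s in (-t)..t, g s := by
  have hshift : Integrable fun s ↦ tent t (s - r) * g s := by
    simpa using (integrable_tent_mul ht (hg.comp (continuous_const_add r))).comp_sub_right r
  have htrans : ∫ s, tent t s * g (r + s) = ∫ s, tent t (s - r) * g s := by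
    simpa using (integral_sub_right_eq_self (fun s ↦ tent t s * g (r + s)) r).symm
  have hIoc : IntegrableOn g (Set.Ioc (-t) t) :=
    (intervalIntegrable_iff_integrableOn_Ioc_of_le (by linarith)).1 (hg.intervalIntegrable _ _)
  rw [htrans, ← integral_sub (integrable_tent_mul ht hg) hshift,
    intervalIntegral.integral_of_le (by linarith), ← integral_const_mul,
    ← integral_indicator measurableSet_Ioc]
  refine integral_mono ((integrable_tent_mul ht hg).sub hshift)
    ((integrable_indicator_iff measurableSet_Ioc).2 (hIoc.const_mul _)) fun s ↦ ?_
  by_cases hs : s ∈ Set.Ioc (-t) t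
  · rw [Set.indicator_of_mem hs, ← sub_mul]
    exact mul_le_mul_of_nonneg_right (tent_sub_tent_le ht r s) (hg_nonneg s)
  · have hts : t ≤ |s| := by
      by_contra! hst
      exact hs ⟨(abs_lt.1 hst).1, (abs_lt.1 hst).2.le⟩
    rw [Set.indicator_of_notMem hs, tent_eq_zero ht hts, zero_mul, zero_sub]
    exact neg_nonpos.2 (mul_nonneg (tent_nonneg _ _) (hg_nonneg s))

end Tent

section TentOccupation

/-- The occupation functional `∫ tent_t(s) φ(w s) ds` of a path `w`, with `φ` the standard Gaussian
density: the variant of `gaussianOccupation` with a triangular instead of a rectangular cut-off. -/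
noncomputable def tentOccupation (t : ℝ) (w : ℝ → ℝ) : ℝ :=
  ∫ s, tent t s * gaussianPDFReal 0 1 (w s)

lemma tentOccupation_sub_le {t : ℝ} (ht : 0 < t) {w : ℝ → ℝ} (hw : Continuous w) (r : ℝ) :
    tentOccupation t w - tentOccupation t (fun s ↦ w (r + s)) ≤
      min (|r| / t) 1 * gaussianOccupation t w :=
  integral_tent_mul_sub_le ht ((continuous_gaussianPDFReal 0 1).comp hw)
    (fun _ ↦ gaussianPDFReal_nonneg _ _ _) r

variable {Ω : Type*} [MeasurableSpace Ω] {P : Measure Ω} [IsFiniteMeasure P] {Y : ℝ → Ω → ℝ}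

lemma integrable_prod_tent_mul {t : ℝ} (ht : 0 < t) (hcont : ∀ ω, Continuous fun s ↦ Y s ω)
    (hmeas : ∀ s, Measurable (Y s)) :
    Integrable (fun q : Ω × ℝ ↦ tent t q.2 * gaussianPDFReal 0 1 (Y q.2 q.1)) (P.prod volume) := by
  have hY : Measurable fun q : Ω × ℝ ↦ Y q.2 q.1 :=
    (measurable_uncurry_of_continuous_of_measurable hcont hmeas).comp measurable_swap
  have htent : Integrable (fun q : Ω × ℝ ↦ tent t q.2) (P.prod volume) := by
    simpa using (integrable_tent_mul ht (continuous_const (y := (1 : ℝ)))).comp_snd P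
  refine htent.mono' (((continuous_tent t).measurable.comp measurable_snd).mul
    ((measurable_gaussianPDFReal 0 1).comp hY)).aestronglyMeasurable (ae_of_all _ fun q ↦ ?_)
  rw [Real.norm_of_nonneg (mul_nonneg (tent_nonneg _ _) (gaussianPDFReal_nonneg _ _ _))]
  exact mul_le_of_le_one_right (tent_nonneg _ _) (gaussianPDFReal_one_le_one _ _)

lemma integrable_tentOccupation {t : ℝ} (ht : 0 < t) (hcont : ∀ ω, Continuous fun s ↦ Y s ω)
    (hmeas : ∀ s, Measurable (Y s)) : Integrable (fun ω ↦ tentOccupation t fun s ↦ Y s ω) P :=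
  (integrable_prod_tent_mul ht hcont hmeas).integral_prod_left

lemma integrable_tent_mul_integral {t : ℝ} (ht : 0 < t) (hcont : ∀ ω, Continuous fun s ↦ Y s ω)
    (hmeas : ∀ s, Measurable (Y s)) :
    Integrable fun s ↦ tent t s * ∫ ω, gaussianPDFReal 0 1 (Y s ω) ∂P := by
  simpa only [integral_const_mul] using
    (integrable_prod_tent_mul (P := P) ht hcont hmeas).integral_prod_right

lemma integral_tentOccupation {t : ℝ} (ht : 0 < t) (hcont : ∀ ω, Continuous fun s ↦ Y s ω)
    (hmeas : ∀ s, Measurable (Y s)) :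
    ∫ ω, tentOccupation t (fun s ↦ Y s ω) ∂P =
      ∫ s, tent t s * ∫ ω, gaussianPDFReal 0 1 (Y s ω) ∂P := by
  simp only [← integral_const_mul]
  exact integral_integral_swap (integrable_prod_tent_mul ht hcont hmeas)

end TentOccupation

section Response

variable {Ω : Type*} [MeasurableSpace Ω] {P : Measure Ω} [IsProbabilityMeasure P]

lemma integral_gaussianPDFReal_add_of_indepFun {X Y : Ω → ℝ} {s : ℝ≥0} (hX : AEMeasurable X P)
    (hY : HasLaw Y (gaussianReal 0 s) P) (hindep : IndepFun X Y P) {v : ℝ≥0} (hv : v ≠ 0) :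
    ∫ ω, gaussianPDFReal 0 v (X ω + Y ω) ∂P = ∫ x, gaussianPDFReal 0 (v + s) x ∂(P.map X) := by
  have hφ : Continuous fun q : ℝ × ℝ ↦ gaussianPDFReal 0 v (q.1 + q.2) :=
    (continuous_gaussianPDFReal 0 v).comp continuous_add
  have : IsProbabilityMeasure (P.map X) := Measure.isProbabilityMeasure_map hX
  rw [← integral_map (f := fun q : ℝ × ℝ ↦ gaussianPDFReal 0 v (q.1 + q.2))
      (hX.prodMk hY.aemeasurable) hφ.aestronglyMeasurable,
    (indepFun_iff_map_prod_eq_prod_map_map hX hY.aemeasurable).1 hindep, hY.map_eq,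
    integral_prod _ (integrable_gaussianPDFReal_comp 0 v (by fun_prop))]
  simp only [integral_gaussianPDFReal_add hv]

variable {B W : ℝ → Ω → ℝ} {X : Ω → ℝ}

lemma IsTwoSidedBM.integral_gaussianPDFReal (hB : IsTwoSidedBM P B) (s : ℝ) {v : ℝ≥0}
    (hv : v ≠ 0) : ∫ ω, gaussianPDFReal 0 v (B s ω) ∂P = gaussianPDFReal 0 (v + ‖s‖₊) 0 := by
  rw [← integral_gaussianPDFReal_add hv, ← hB.map_eval s]
  simp only [zero_add]
  rw [integral_map (hB.aemeas s) (continuous_gaussianPDFReal 0 v).aestronglyMeasurable]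

lemma integral_gaussianPDFReal_add_lt (hB : IsTwoSidedBM P B) (hW : IsTwoSidedBM P W)
    (hX : AEMeasurable X P) (hX0 : P.map X ≠ Measure.dirac 0) {s : ℝ}
    (hindep : IndepFun X (W s) P) {v : ℝ≥0} (hv : v ≠ 0) :
    ∫ ω, gaussianPDFReal 0 v (X ω + W s ω) ∂P < ∫ ω, gaussianPDFReal 0 v (B s ω) ∂P := by
  have : IsProbabilityMeasure (P.map X) := Measure.isProbabilityMeasure_map hX
  rw [integral_gaussianPDFReal_add_of_indepFun hX ⟨hW.aemeas s, hW.map_eval s⟩ hindep hv,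
    hB.integral_gaussianPDFReal s hv]
  exact integral_gaussianPDFReal_lt hX0 (by positivity)

lemma exists_pos_forall_le_integral_tentOccupation_sub (hB : IsContinuousTwoSidedBM P B)
    (hW : IsContinuousTwoSidedBM P W) (hX : Measurable X) (hX0 : P.map X ≠ Measure.dirac 0)
    (hindep : ∀ s, IndepFun X (W s) P) :
    ∃ c > 0, ∀ t ≥ 1, c ≤ (∫ ω, tentOccupation t (fun s ↦ B s ω) ∂P) -
      ∫ ω, tentOccupation t (fun s ↦ X ω + W s ω) ∂P := by
  have hXWcont : ∀ ω, Continuous fun s ↦ X ω + W s ω := fun ω ↦ (hW.continuous ω).const_add _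
  have hXWmeas : ∀ s, Measurable fun ω ↦ X ω + W s ω := fun s ↦ hX.add (hW.measurable s)
  let gap (s : ℝ) : ℝ := (∫ ω, gaussianPDFReal 0 1 (B s ω) ∂P) -
    ∫ ω, gaussianPDFReal 0 1 (X ω + W s ω) ∂P
  have hgap_pos : ∀ s, 0 < gap s := fun s ↦ sub_pos.2 <|
    integral_gaussianPDFReal_add_lt hB.toIsTwoSidedBM hW.toIsTwoSidedBM hX.aemeasurable hX0
      (hindep s) one_ne_zero
  have hgap_int : ∀ t > 0, Integrable fun s ↦ tent t s * gap s := fun t ht ↦ by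
    simp only [gap, mul_sub]
    exact (integrable_tent_mul_integral ht hB.continuous hB.measurable).sub
      (integrable_tent_mul_integral ht hXWcont hXWmeas)
  refine ⟨∫ s, tent 1 s * gap s, ?_, fun t ht ↦ ?_⟩
  · have hnonneg : 0 ≤ fun s ↦ tent 1 s * gap s :=
      fun s ↦ mul_nonneg (tent_nonneg 1 s) (hgap_pos s).le
    have hsupp : Set.Ioo (-1 : ℝ) 1 ⊆ Function.support fun s ↦ tent 1 s * gap s :=
      fun s hs ↦ (mul_pos (tent_pos one_pos (abs_lt.2 hs)) (hgap_pos s)).ne'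
    exact (integral_pos_iff_support_of_nonneg hnonneg (hgap_int 1 one_pos)).2 <|
      (by simp : 0 < volume (Set.Ioo (-1 : ℝ) 1)).trans_le (measure_mono hsupp)
  · have ht0 : 0 < t := one_pos.trans_le ht
    rw [integral_tentOccupation ht0 hB.continuous hB.measurable,
      integral_tentOccupation ht0 hXWcont hXWmeas,
      ← integral_sub (integrable_tent_mul_integral ht0 hB.continuous hB.measurable)
        (integrable_tent_mul_integral ht0 hXWcont hXWmeas)]
    simp only [← mul_sub]
    exact integral_mono (hgap_int 1 one_pos) (hgap_int t ht0) fun s ↦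
      mul_le_mul_of_nonneg_right (tent_mono one_pos ht s) (hgap_pos s).le

end Response

section ScaleMinorant

lemma mul_sub_exp_mul_exp_le {θ κ : ℝ} (hκ : 0 < κ) (hθ0 : 0 ≤ θ) (hθ1 : θ ≤ 1) (a L : ℝ) :
    θ * a - κ⁻¹ * (Real.exp (-L) * Real.exp (κ * a)) ≤ κ⁻¹ * (L * θ) := by
  have hexp : -L + κ * a ≤ Real.exp (-L + κ * a) := by
    linarith [Real.add_one_le_exp (-L + κ * a)]
  have hθexp : θ * (-L + κ * a) ≤ Real.exp (-L + κ * a) :=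
    (mul_le_mul_of_nonneg_left hexp hθ0).trans (mul_le_of_le_one_left (Real.exp_nonneg _) hθ1)
  rw [← Real.exp_add]
  calc θ * a - κ⁻¹ * Real.exp (-L + κ * a)
      = κ⁻¹ * (θ * (κ * a) - Real.exp (-L + κ * a)) := by field_simp
    _ ≤ κ⁻¹ * (L * θ) := by
        gcongr
        linarith

/-- A functional of a path `b` and a candidate shift `w` of it, at the time scale `4 ^ k`: it
compares their tent occupations, with an exponential penalty that becomes active when the
occupation of `b` exceeds its typical size `2 ^ k` by a factor of order `k + 1`. -/
noncomputable def scaleMinorant (k : ℕ) (b w : ℝ → ℝ) : ℝ :=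
  (tentOccupation (4 ^ k) b - tentOccupation (4 ^ k) w -
    8 * 2 ^ k * (Real.exp (-(k + 1)) *
      Real.exp ((8 * 2 ^ k)⁻¹ * gaussianOccupation (4 ^ k) b))) / (8 * (k + 1))

lemma scaleMinorant_le {b : ℝ → ℝ} (hb : Continuous b) (k : ℕ) (r : ℝ) :
    scaleMinorant k b (fun s ↦ b (r + s)) ≤ 2 ^ k * min (|r| / 4 ^ k) 1 := by
  have hdiff := tentOccupation_sub_le (by positivity : (0 : ℝ) < 4 ^ k) hb r
  have htrunc := mul_sub_exp_mul_exp_le (κ := (8 * 2 ^ k : ℝ)⁻¹) (by positivity)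
    (by positivity : 0 ≤ min (|r| / 4 ^ k) 1) (min_le_right _ _) (gaussianOccupation (4 ^ k) b)
    (k + 1)
  rw [inv_inv] at htrunc
  rw [scaleMinorant, div_le_iff₀ (by positivity)]
  linarith

lemma eventually_two_pow_mul_exp_neg_le {ε : ℝ} (hε : 0 < ε) :
    ∀ᶠ k : ℕ in atTop, 2 ^ k * Real.exp (-(k + 1 : ℝ)) ≤ ε := by
  have hratio : 2 * Real.exp (-1) < 1 := by
    rw [Real.exp_neg, ← div_eq_mul_inv, div_lt_one (Real.exp_pos 1)]
    linarith [Real.add_one_lt_exp one_ne_zero]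
  have hpow : ∀ k : ℕ, 2 ^ k * Real.exp (-(k + 1 : ℝ)) ≤ (2 * Real.exp (-1)) ^ k := fun k ↦ by
    rw [mul_pow, ← Real.exp_nat_mul]
    gcongr
    linarith
  filter_upwards [(tendsto_pow_atTop_nhds_zero_of_lt_one (by positivity) hratio).eventually_le_const
    hε] with k hk
  exact (hpow k).trans hk

variable {Ω : Type*} [MeasurableSpace Ω] {P : Measure Ω} [IsProbabilityMeasure P]
  {B Y : ℝ → Ω → ℝ}

lemma eight_mul_inv_mul_sqrt_four_pow (k : ℕ) :
    8 * (8 * 2 ^ k : ℝ)⁻¹ * √((4 ^ k : ℕ) : ℝ) = 1 := by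
  have hsqrt : √((4 ^ k : ℕ) : ℝ) = 2 ^ k := by
    rw [Real.sqrt_eq_iff_eq_sq (by positivity) (by positivity)]
    push_cast
    rw [← pow_mul, mul_comm, pow_mul]
    norm_num
  rw [hsqrt]
  field_simp

lemma IsContinuousTwoSidedBM.integrable_exp_gaussianOccupation_four_pow
    (hB : IsContinuousTwoSidedBM P B) (k : ℕ) :
    Integrable (fun ω ↦ Real.exp ((8 * 2 ^ k)⁻¹ * gaussianOccupation (4 ^ k) fun s ↦ B s ω)) P := by
  simpa using hB.integrable_exp_gaussianOccupation (by positivity)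
    (eight_mul_inv_mul_sqrt_four_pow k).le

lemma IsContinuousTwoSidedBM.integral_exp_gaussianOccupation_four_pow_le
    (hB : IsContinuousTwoSidedBM P B) (k : ℕ) :
    ∫ ω, Real.exp ((8 * 2 ^ k)⁻¹ * gaussianOccupation (4 ^ k) fun s ↦ B s ω) ∂P ≤ 2 := by
  simpa using hB.integral_exp_gaussianOccupation_le (by positivity)
    (eight_mul_inv_mul_sqrt_four_pow k).le

lemma integrable_scaleMinorant (hB : IsContinuousTwoSidedBM P B)
    (hYcont : ∀ ω, Continuous fun s ↦ Y s ω) (hYmeas : ∀ s, Measurable (Y s)) (k : ℕ) :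
    Integrable (fun ω ↦ scaleMinorant k (fun s ↦ B s ω) fun s ↦ Y s ω) P :=
  (((integrable_tentOccupation (by positivity) hB.continuous hB.measurable).sub
    (integrable_tentOccupation (by positivity) hYcont hYmeas)).sub
      ((hB.integrable_exp_gaussianOccupation_four_pow k).const_mul _ |>.const_mul _)).div_const _

lemma le_integral_scaleMinorant (hB : IsContinuousTwoSidedBM P B)
    (hYcont : ∀ ω, Continuous fun s ↦ Y s ω) (hYmeas : ∀ s, Measurable (Y s)) (k : ℕ) :
    ((∫ ω, tentOccupation (4 ^ k) (fun s ↦ B s ω) ∂P) -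
      (∫ ω, tentOccupation (4 ^ k) (fun s ↦ Y s ω) ∂P) -
      16 * (2 ^ k * Real.exp (-(k + 1)))) / (8 * (k + 1)) ≤
      ∫ ω, scaleMinorant k (fun s ↦ B s ω) (fun s ↦ Y s ω) ∂P := by
  have hBint := integrable_tentOccupation (P := P) (by positivity : (0 : ℝ) < 4 ^ k)
    hB.continuous hB.measurable
  have hYint := integrable_tentOccupation (P := P) (by positivity : (0 : ℝ) < 4 ^ k)
    hYcont hYmeas
  have hdiffint : Integrable (fun ω ↦ tentOccupation (4 ^ k) (fun s ↦ B s ω) -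
      tentOccupation (4 ^ k) fun s ↦ Y s ω) P := hBint.sub hYint
  have hexpint := ((hB.integrable_exp_gaussianOccupation_four_pow k).const_mul
    (Real.exp (-(k + 1)))).const_mul (8 * 2 ^ k)
  simp only [scaleMinorant]
  rw [integral_div, integral_sub hdiffint hexpint, integral_sub hBint hYint,
    integral_const_mul, integral_const_mul]
  have hexp := mul_le_mul_of_nonneg_left (hB.integral_exp_gaussianOccupation_four_pow_le k)
    (by positivity : 0 ≤ 8 * 2 ^ k * Real.exp (-(k + 1 : ℝ)))
  exact div_le_div_of_nonneg_right (by linarith) (by positivity)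

lemma tsum_ofReal_integral_scaleMinorant_eq_top (hB : IsContinuousTwoSidedBM P B)
    (hYcont : ∀ ω, Continuous fun s ↦ Y s ω) (hYmeas : ∀ s, Measurable (Y s))
    {c : ℝ} (hc : 0 < c) (hgap : ∀ t ≥ 1, c ≤ (∫ ω, tentOccupation t (fun s ↦ B s ω) ∂P) -
      ∫ ω, tentOccupation t (fun s ↦ Y s ω) ∂P) :
    ∑' k, ENNReal.ofReal (∫ ω, scaleMinorant k (fun s ↦ B s ω) (fun s ↦ Y s ω) ∂P) = ⊤ := by
  refine tsum_ofReal_eq_top_of_eventually_div_le (by positivity : 0 < c / 16) ?_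
  filter_upwards [eventually_two_pow_mul_exp_neg_le (by positivity : 0 < c / 32)] with k hk
  have hgapk := hgap (4 ^ k) (one_le_pow₀ (by norm_num))
  calc c / 16 / (k + 1) = (c / 2) / (8 * (k + 1)) := by field_simp; norm_num
    _ ≤ _ := by
        gcongr
        linarith
    _ ≤ _ := le_integral_scaleMinorant hB hYcont hYmeas k

end ScaleMinorant

section UnbiasedShift

variable {Ω : Type*} [MeasurableSpace Ω] {P : Measure Ω} [IsProbabilityMeasure P]
  {B : ℝ → Ω → ℝ} {T : Ω → ℝ}

lemma lintegral_sqrt_abs_eq_top_of_shift_eq_add {W : ℝ → Ω → ℝ} {X : Ω → ℝ}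
    (hB : IsContinuousTwoSidedBM P B) (hW : IsContinuousTwoSidedBM P W) (hX : Measurable X)
    (hX0 : P.map X ≠ Measure.dirac 0) (hindep : ∀ s, IndepFun X (W s) P)
    (hshift : ∀ᵐ ω ∂P, ∀ s, B (T ω + s) ω = X ω + W s ω) :
    ∫⁻ ω, ENNReal.ofReal √|T ω| ∂P = ⊤ := by
  have hcont : ∀ ω, Continuous fun s ↦ X ω + W s ω := fun ω ↦ (hW.continuous ω).const_add _
  have hmeas : ∀ s, Measurable fun ω ↦ X ω + W s ω := fun s ↦ hX.add (hW.measurable s)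
  obtain ⟨c, hc, hgap⟩ :=
    exists_pos_forall_le_integral_tentOccupation_sub hB hW hX hX0 hindep
  refine lintegral_sqrt_abs_eq_top (integrable_scaleMinorant hB hcont hmeas) (fun k ↦ ?_)
    (tsum_ofReal_integral_scaleMinorant_eq_top hB hcont hmeas hc hgap)
  filter_upwards [hshift] with ω hω
  simpa only [hω] using scaleMinorant_le (hB.continuous ω) k (T ω)

theorem unbiased_shift_sqrt_moment_infinite_general {ν : Measure ℝ} [IsProbabilityMeasure ν]
    (hB : IsTwoSidedBM P B) (hν : ν ≠ Measure.dirac 0)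
    (hshift : IsTwoSidedBM P fun t ω ↦ B (T ω + t) ω - B (T ω) ω)
    (hindep : IndepFun (fun ω t ↦ B (T ω + t) ω - B (T ω) ω) (fun ω ↦ B (T ω) ω) P)
    (hT : Embeds P B T ν) :
    ∫⁻ ω, ENNReal.ofReal √|T ω| ∂P = ⊤ := by
  have hBT : AEMeasurable (fun ω ↦ B (T ω) ω) P :=
    AEMeasurable.of_map_ne_zero (hT ▸ IsProbabilityMeasure.ne_zero ν)
  obtain ⟨B', hB', hBB'⟩ := hB.exists_isContinuousTwoSidedBM
  obtain ⟨W, hW, hshiftW⟩ := hshift.exists_isContinuousTwoSidedBM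
  refine lintegral_sqrt_abs_eq_top_of_shift_eq_add hB' hW hBT.measurable_mk ?_ (fun s ↦ ?_) ?_
  · rwa [← Measure.map_congr hBT.ae_eq_mk, hT]
  · exact (hindep.comp (measurable_pi_apply s) measurable_id).symm.congr hBT.ae_eq_mk
      (hshiftW.mono fun ω hω ↦ hω s)
  · filter_upwards [hBB', hshiftW, hBT.ae_eq_mk] with ω hω hωW hωX s
    rw [← hω, ← hωX, ← hωW, add_sub_cancel]

end UnbiasedShift

/-- if `T` is an unbiased shift embedding `ν ≠ δ₀`, then `E₀[√|T|] = ∞`. -/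
theorem unbiased_shift_sqrt_moment_infinite {Ω : Type*} [MeasurableSpace Ω]
    (P : Measure Ω) [IsProbabilityMeasure P]
    (B : ℝ → Ω → ℝ) (hB : IsTwoSidedBM P B)
    (ν : Measure ℝ) [IsProbabilityMeasure ν] (hν : ν ≠ Measure.dirac 0)
    (T : Ω → ℝ) (hT : IsUnbiasedShift P B T) (hTν : Embeds P B T ν) :
    ∫⁻ ω, ENNReal.ofReal (Real.sqrt |T ω|) ∂P = ⊤ :=
  unbiased_shift_sqrt_moment_infinite_general hB hν hT.2.1 hT.2.2 hTν
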